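/- Let K be a field, O ⊆ K a one-dimensional semilocal Dedekind domain with fraction field K, and K′ ⊆ K a subfield. Then O ∩ K′ is either a field or a semilocal Dedekind domain, and in either case its fraction field is K′. -/

import Mathlib

open scoped WithZero nonZeroDivisors

/-- Geometric sums of integral elements: some arithmetic progression gives units. -/
lemma aux_unit {F Γ : Type*} [Field F] [LinearOrderedCommGroupWithZero Γ] (v : Valuation F Γ)
    (x : F) (hx : v x ≤ 1) :
    ∃ d : ℕ, 0 < d ∧ ∀ k : ℕ, v (∑ j ∈ Finset.range (1 + d * k), x ^ j) = 1 := by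
  have hle : ∀ (y : F) (_ : v y ≤ 1) (m : ℕ), v (∑ j ∈ Finset.range m, y ^ j) ≤ 1 := by
    intro y hy m
    refine v.map_sum_le fun j _ => ?_
    rw [map_pow]
    exact pow_le_one₀ zero_le hy
  by_cases h : ∃ m : ℕ, 0 < m ∧ v (∑ j ∈ Finset.range m, x ^ j) < 1
  · obtain ⟨m, hm, hlt⟩ := h
    refine ⟨m, hm, fun k => ?_⟩
    have e1 : ∑ j ∈ Finset.range (m * k), x ^ j
        = (∑ j ∈ Finset.range m, x ^ j) * ∑ j ∈ Finset.range k, (x ^ m) ^ j := by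
      induction k with
      | zero => simp
      | succ k ih =>
        rw [Nat.mul_succ, Finset.sum_range_add, ih, Finset.sum_range_succ, mul_add, ← pow_mul]
        congr 1
        rw [Finset.sum_mul]
        exact Finset.sum_congr rfl fun j _ => by rw [pow_add, mul_comm]
    have e2 : ∑ j ∈ Finset.range (1 + m * k), x ^ j
        = 1 + x * ∑ j ∈ Finset.range (m * k), x ^ j := by
      rw [Finset.sum_range_add, Finset.mul_sum]
      simp [pow_add]
    rw [e2]
    apply v.map_one_add_of_lt
    rw [e1, map_mul, map_mul]
    have hxm : v (x ^ m) ≤ 1 := by rw [map_pow]; exact pow_le_one₀ zero_le hx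
    calc _ ≤ 1 * (v (∑ j ∈ Finset.range m, x ^ j) * 1) := by
            gcongr
            exact hle _ hxm k
      _ < 1 := by simpa using hlt
  · push Not at h
    exact ⟨1, one_pos, fun k => le_antisymm (hle x hx _) (h _ (by omega))⟩

lemma aux_big {F Γ : Type*} [Field F] [LinearOrderedCommGroupWithZero Γ] (v : Valuation F Γ)
    (x : F) (hx : 1 < v x) (n : ℕ) :
    v (∑ j ∈ Finset.range (n + 1), x ^ j) = v x ^ n := by
  induction n with
  | zero => simp
  | succ n ih =>
    rw [Finset.sum_range_succ, v.map_add_eq_of_lt_right, map_pow]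
    rw [ih, map_pow]
    exact pow_lt_pow_right₀ hx (Nat.lt_succ_self n)

/-- The denominator trick. -/
lemma aux_den {F Γ ι : Type*} [Field F] [LinearOrderedCommGroupWithZero Γ] [Finite ι] [Nonempty ι]
    (v : ι → Valuation F Γ) (x : F) :
    ∃ b : F, b ≠ 0 ∧ (∀ i, v i b ≤ 1) ∧ (∀ i, v i (b * x) ≤ 1) ∧
      ∀ i, v i x ≤ 1 → v i b = 1 := by
  classical
  have := Fintype.ofFinite ι
  have h : ∀ i, ∃ d : ℕ, 0 < d ∧ (v i x ≤ 1 →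
      ∀ k : ℕ, v i (∑ j ∈ Finset.range (1 + d * k), x ^ j) = 1) := by
    intro i
    by_cases hx : v i x ≤ 1
    · obtain ⟨d, hd, h⟩ := aux_unit (v i) x hx
      exact ⟨d, hd, fun _ => h⟩
    · exact ⟨1, one_pos, fun h => absurd h hx⟩
  choose d hd h using h
  set N := ∏ i, d i with hN
  have hNpos : 0 < N := Finset.prod_pos fun i _ => hd i
  set g := ∑ j ∈ Finset.range (1 + N), x ^ j with hg
  have h1 : ∀ i, v i x ≤ 1 → v i g = 1 := by
    intro i hi
    obtain ⟨k, hk⟩ := Finset.dvd_prod_of_mem d (Finset.mem_univ i)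
    rw [hg, hN, hk]
    exact h i hi k
  have h2 : ∀ i, 1 < v i x → v i g = v i x ^ N := by
    intro i hi
    rw [hg, add_comm]
    exact aux_big (v i) x hi N
  have h3 : ∀ i, 1 ≤ v i g ∧ v i x ≤ v i g := by
    intro i
    rcases le_or_gt (v i x) 1 with hi | hi
    · rw [h1 i hi]; exact ⟨le_rfl, hi⟩
    · rw [h2 i hi]; exact ⟨one_le_pow₀ hi.le, le_self_pow₀ hi.le hNpos.ne'⟩
  have hg0 : g ≠ 0 := by
    obtain ⟨i⟩ := ‹Nonempty ι›
    intro h0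
    have := (h3 i).1
    rw [h0, map_zero] at this
    exact absurd this (not_le.2 zero_lt_one)
  refine ⟨g⁻¹, inv_ne_zero hg0, fun i => ?_, fun i => ?_, fun i hi => ?_⟩
  · rw [map_inv₀]; exact inv_le_one_of_one_le₀ (h3 i).1
  · rw [map_mul, map_inv₀]
    have : 0 < v i g := lt_of_lt_of_le zero_lt_one (h3 i).1
    rw [mul_comm, ← div_eq_mul_inv]
    exact (div_le_one₀ this).2 (h3 i).2
  · rw [map_inv₀, h1 i hi, inv_one]

section
variable {R F ι : Type*} [CommRing R] [Field F] [Algebra R F]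

/-- The centre of a valuation on `R`. -/
def auxCentre (v : Valuation F ℤᵐ⁰) (hv : ∀ r : R, v (algebraMap R F r) ≤ 1) : Ideal R where
  carrier := {r | v (algebraMap R F r) < 1}
  add_mem' := by
    intro a b ha hb
    simp only [Set.mem_ofPred_eq, map_add] at *
    exact v.map_add_lt ha hb
  zero_mem' := by simp
  smul_mem' := by
    intro c a ha
    simp only [Set.mem_ofPred_eq, smul_eq_mul, map_mul] at *
    exact lt_of_le_of_lt (mul_le_of_le_one_left' (hv c)) ha

lemma mem_auxCentre (v : Valuation F ℤᵐ⁰) (hv : ∀ r : R, v (algebraMap R F r) ≤ 1) (r : R) :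
    r ∈ auxCentre v hv ↔ v (algebraMap R F r) < 1 := Iff.rfl

lemma auxCentre_prime (v : Valuation F ℤᵐ⁰) (hv : ∀ r : R, v (algebraMap R F r) ≤ 1) :
    (auxCentre v hv).IsPrime := by
  constructor
  · rw [Ideal.ne_top_iff_one, mem_auxCentre]
    simp
  · intro a b hab
    simp only [mem_auxCentre, map_mul] at *
    by_contra! h
    have h1 := le_antisymm (hv a) h.1
    have h2 := le_antisymm (hv b) h.2
    rw [h1, h2] at hab
    simp at hab

lemma aux_le (v : ι → Valuation F ℤᵐ⁰)
    (hR : ∀ x : F, (∀ i, v i x ≤ 1) ↔ ∃ r : R, algebraMap R F r = x)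
    (i : ι) (r : R) : v i (algebraMap R F r) ≤ 1 := (hR _).2 ⟨r, rfl⟩ i

lemma aux_top [Finite ι] [Nonempty ι] (v : ι → Valuation F ℤᵐ⁰)
    (hinj : Function.Injective (algebraMap R F))
    (hR : ∀ x : F, (∀ i, v i x ≤ 1) ↔ ∃ r : R, algebraMap R F r = x)
    (Q : Ideal R) (hQ : ∀ i, ∃ q ∈ Q, v i (algebraMap R F q) = 1) : Q = ⊤ := by
  by_contra hne
  have hv := aux_le v hR
  obtain ⟨i₀⟩ := ‹Nonempty ι›
  have hsub : (Q : Set R) ⊆ ⋃ i ∈ (Set.univ : Set ι), (auxCentre (v i) (hv i) : Set R) := by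
    intro q hq
    simp only [Set.mem_univ, Set.iUnion_true, Set.mem_iUnion, SetLike.mem_coe, mem_auxCentre]
    by_contra! h
    have h1 : ∀ i, v i (algebraMap R F q) = 1 := fun i => le_antisymm (hv i q) (h i)
    have hq0 : algebraMap R F q ≠ 0 := by
      intro h0
      have := h1 i₀
      rw [h0, map_zero] at this
      exact zero_ne_one this
    obtain ⟨s, hs⟩ := (hR (algebraMap R F q)⁻¹).1 (fun i => by rw [map_inv₀, h1 i, inv_one])
    apply hne
    rw [Ideal.eq_top_iff_one]
    have : s * q = 1 := hinj (by rw [map_mul, hs, inv_mul_cancel₀ hq0, map_one])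
    rw [← this]
    exact Q.mul_mem_left _ hq
  obtain ⟨i, -, hi⟩ := (Ideal.subset_union_prime_finite Set.finite_univ i₀ i₀
    (fun i _ _ _ => auxCentre_prime (v i) (hv i))).1 hsub
  obtain ⟨q, hq, hq1⟩ := hQ i
  exact absurd hq1 (ne_of_lt (hi hq))

lemma aux_semilocal [Finite ι] [Nonempty ι] (v : ι → Valuation F ℤᵐ⁰)
    (hinj : Function.Injective (algebraMap R F))
    (hR : ∀ x : F, (∀ i, v i x ≤ 1) ↔ ∃ r : R, algebraMap R F r = x) : {I : Ideal R | I.IsMaximal}.Finite := by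
  have hv := aux_le v hR
  refine (Set.finite_range fun i => auxCentre (v i) (hv i)).subset ?_
  intro M hM
  have hM : M.IsMaximal := hM
  by_contra hcon
  apply hM.ne_top
  apply aux_top v hinj hR
  intro i
  by_contra! h
  apply hcon
  refine ⟨i, (hM.eq_of_le (auxCentre_prime (v i) (hv i)).ne_top ?_).symm⟩
  intro q hq
  exact lt_of_le_of_ne (hv i q) (h q hq)

lemma aux_frac [Finite ι] [Nonempty ι] (v : ι → Valuation F ℤᵐ⁰)
    (hinj : Function.Injective (algebraMap R F))
    (hR : ∀ x : F, (∀ i, v i x ≤ 1) ↔ ∃ r : R, algebraMap R F r = x) : IsFractionRing R F := by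
  have : FaithfulSMul R F := (faithfulSMul_iff_algebraMap_injective R F).2 hinj
  have : IsDomain R := hinj.isDomain (algebraMap R F)
  refine IsFractionRing.of_field R F fun z => ?_
  obtain ⟨b, hb0, hb, hbx, -⟩ := aux_den v z
  obtain ⟨r, hr⟩ := (hR _).1 hb
  obtain ⟨s, hs⟩ := (hR _).1 hbx
  refine ⟨s, r, ?_⟩
  rw [hr, hs]
  field_simp

lemma aux_max (v : ι → Valuation F ℤᵐ⁰)
    (hinj : Function.Injective (algebraMap R F))
    (hR : ∀ x : F, (∀ i, v i x ≤ 1) ↔ ∃ r : R, algebraMap R F r = x)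
    (i : ι) (I : Ideal R) (hI : I ≠ ⊥) :
    ∃ a ∈ I, a ≠ 0 ∧ ∀ y ∈ I, v i (algebraMap R F y) ≤ v i (algebraMap R F a) := by
  have hv := aux_le v hR
  obtain ⟨a₀, ha₀, hne⟩ := Submodule.exists_mem_ne_zero_of_ne_bot hI
  have h0 : ∀ r : R, r ≠ 0 → v i (algebraMap R F r) ≠ 0 := by
    intro r hr
    rw [Valuation.ne_zero_iff]
    exact fun h => hr (hinj (by rw [h, map_zero]))
  let S : Set R := {a | a ∈ I ∧ a ≠ 0}
  let f : R → ℕ := fun a => (-(WithZero.log (v i (algebraMap R F a)))).toNat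
  have hS : S.Nonempty := ⟨a₀, ha₀, hne⟩
  refine ⟨Function.argminOn f S hS, (Function.argminOn_mem f S hS).1,
    (Function.argminOn_mem f S hS).2, fun y hy => ?_⟩
  set a := Function.argminOn f S hS with ha
  have haS : a ∈ S := Function.argminOn_mem f S hS
  by_cases hy0 : y = 0
  · simp [hy0]
  have hle : f a ≤ f y := Function.argminOn_le f S (show y ∈ S from ⟨hy, hy0⟩)
  have hlog : ∀ r : R, r ≠ 0 → WithZero.log (v i (algebraMap R F r)) ≤ 0 := by
    intro r hr
    rw [← WithZero.log_one]
    exact (WithZero.log_le_log (h0 r hr) one_ne_zero).2 (hv i r)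
  have l1 := hlog y hy0
  have l2 := hlog a haS.2
  rw [← WithZero.log_le_log (h0 y hy0) (h0 a haS.2)]
  simp only [f] at hle
  omega

lemma aux_inv [Finite ι] [Nonempty ι] (v : ι → Valuation F ℤᵐ⁰)
    (hinj : Function.Injective (algebraMap R F))
    (hR : ∀ x : F, (∀ i, v i x ≤ 1) ↔ ∃ r : R, algebraMap R F r = x)
    [IsFractionRing R F] [IsDomain R] (I : Ideal R) (hI : I ≠ ⊥) :
    (I : FractionalIdeal R⁰ F) * (I : FractionalIdeal R⁰ F)⁻¹ = 1 := by
  classical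
  have := Fintype.ofFinite ι
  have hv := aux_le v hR
  have hI' : (I : FractionalIdeal R⁰ F) ≠ 0 := FractionalIdeal.coeIdeal_ne_zero.2 hI
  choose a haI ha0 ha using fun i => aux_max v hinj hR i I hI
  let Q : Ideal R := Submodule.comap (Algebra.linearMap R F)
    ((I : FractionalIdeal R⁰ F) * (I : FractionalIdeal R⁰ F)⁻¹ : FractionalIdeal R⁰ F)
  have hQ : Q = ⊤ := by
    apply aux_top v hinj hR
    intro i
    have hai : algebraMap R F (a i) ≠ 0 := fun h => ha0 i (hinj (by rw [h, map_zero]))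
    have hvi : ∀ j, v j (algebraMap R F (a i)) ≠ 0 := fun j => (Valuation.ne_zero_iff _).2 hai
    have hb : ∀ j, ∃ b : R, v i (algebraMap R F b) = 1 ∧
        v j (algebraMap R F b * (algebraMap R F (a j) / algebraMap R F (a i))) ≤ 1 := by
      intro j
      obtain ⟨b, hb0, hb, hbx, hbi⟩ := aux_den v (algebraMap R F (a j) / algebraMap R F (a i))
      obtain ⟨r, rfl⟩ := (hR _).1 hb
      refine ⟨r, hbi i ?_, hbx j⟩
      rw [map_div₀]
      exact (div_le_one₀ (zero_lt_iff.2 (hvi i))).2 (ha i _ (haI j))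
    choose b hb1 hb2 using hb
    set s := ∏ j, b j with hs
    have hs1 : v i (algebraMap R F s) = 1 := by
      rw [hs, map_prod, map_prod]
      exact Finset.prod_eq_one fun j _ => hb1 j
    refine ⟨s, ?_, hs1⟩
    change algebraMap R F s ∈
      (I : FractionalIdeal R⁰ F) * (I : FractionalIdeal R⁰ F)⁻¹
    have e : algebraMap R F s = algebraMap R F (a i) *
        (algebraMap R F s / algebraMap R F (a i)) := by field_simp
    rw [e]
    refine FractionalIdeal.mul_mem_mul (FractionalIdeal.mem_coeIdeal_of_mem _ (haI i)) ?_
    rw [FractionalIdeal.mem_inv_iff hI']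
    intro y hy
    obtain ⟨y, hyI, rfl⟩ := (FractionalIdeal.mem_coeIdeal _).1 hy
    rw [FractionalIdeal.mem_one_iff]
    apply (hR _).1
    intro j
    obtain ⟨t, ht⟩ := Finset.dvd_prod_of_mem b (Finset.mem_univ j)
    calc v j (algebraMap R F s / algebraMap R F (a i) * algebraMap R F y)
        = v j (algebraMap R F s) / v j (algebraMap R F (a i)) * v j (algebraMap R F y) := by
          rw [map_mul, map_div₀]
      _ ≤ v j (algebraMap R F s) / v j (algebraMap R F (a i)) * v j (algebraMap R F (a j)) :=
          mul_le_mul_right (ha j y hyI) _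
      _ = v j (algebraMap R F t) *
          v j (algebraMap R F (b j) * (algebraMap R F (a j) / algebraMap R F (a i))) := by
          rw [← map_div₀, ← map_mul, ← map_mul, hs, ht, map_mul (algebraMap R F)]
          congr 1
          ring
      _ ≤ 1 := mul_le_one' (hv j t) (hb2 j)
  apply le_antisymm
  · exact FractionalIdeal.mul_one_div_le_one
  · rw [FractionalIdeal.one_le]
    have : (1 : R) ∈ Q := by rw [hQ]; trivial
    have h2 : algebraMap R F 1 ∈
      (I : FractionalIdeal R⁰ F) * (I : FractionalIdeal R⁰ F)⁻¹ := this
    rwa [map_one] at h2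

lemma aux_dedekind [Finite ι] [Nonempty ι] (v : ι → Valuation F ℤᵐ⁰)
    (hinj : Function.Injective (algebraMap R F))
    (hR : ∀ x : F, (∀ i, v i x ≤ 1) ↔ ∃ r : R, algebraMap R F r = x) : IsDedekindDomain R := by
  have : IsDomain R := hinj.isDomain (algebraMap R F)
  have := aux_frac v hinj hR
  rw [isDedekindDomain_iff_mul_inv_cancel (K := F)]
  intro I hI
  obtain ⟨a, J, ha, hJ⟩ := FractionalIdeal.exists_eq_spanSingleton_mul I
  have hJ0 : J ≠ ⊥ := by
    rintro rfl
    apply hI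
    rw [hJ]
    simp
  have ha' : algebraMap R F a ≠ 0 := fun h => ha (hinj (by rw [h, map_zero]))
  rw [FractionalIdeal.mul_inv_cancel_iff]
  refine ⟨FractionalIdeal.spanSingleton R⁰ (algebraMap R F a) * (J : FractionalIdeal R⁰ F)⁻¹, ?_⟩
  rw [hJ, mul_mul_mul_comm, aux_inv v hinj hR J hJ0, FractionalIdeal.spanSingleton_mul_spanSingleton,
    inv_mul_cancel₀ ha', FractionalIdeal.spanSingleton_one, mul_one]

end

/-- For a one-dimensional semilocal Dedekind domain `O ⊆ K` with fraction field `K` and a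
subfield `K′ ⊆ K`, the intersection `O ∩ K′` is a field or a semilocal Dedekind domain,
and in either case its fraction field is `K′`. -/
theorem stmt_2 {K : Type*} [Field K] (O : Subring K)
    (hDed : IsDedekindDomain O)
    (hsemilocal : {I : Ideal O | I.IsMaximal}.Finite)
    (hnotfield : ¬ IsField O)
    (hfrac : IsFractionRing O K)
    (K' : Subfield K) :
    (IsField ↥(O ⊓ K'.toSubring) ∨
      (IsDedekindDomain ↥(O ⊓ K'.toSubring) ∧
        {I : Ideal ↥(O ⊓ K'.toSubring) | I.IsMaximal}.Finite)) ∧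
    (letI : Algebra ↥(O ⊓ K'.toSubring) ↥K'.toSubring :=
      (Subring.inclusion (inf_le_right : O ⊓ K'.toSubring ≤ K'.toSubring)).toAlgebra
     IsFractionRing ↥(O ⊓ K'.toSubring) ↥K'.toSubring) := by
  have hfin : Finite (MaximalSpectrum O) := by
    have : Finite {I : Ideal O | I.IsMaximal} := hsemilocal
    exact Finite.of_injective
      (fun M : MaximalSpectrum O => (⟨M.asIdeal, M.isMaximal⟩ : {I : Ideal O | I.IsMaximal}))
      (fun M N h => MaximalSpectrum.ext (congrArg Subtype.val h))
  let e := IsDedekindDomain.HeightOneSpectrum.equivMaximalSpectrum hnotfield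
  have : Finite (IsDedekindDomain.HeightOneSpectrum O) := Finite.of_equiv _ e.symm
  have : Nonempty (IsDedekindDomain.HeightOneSpectrum O) :=
    (inferInstance : Nonempty (MaximalSpectrum O)).map e.symm
  let _ : Algebra ↥(O ⊓ K'.toSubring) ↥K' :=
    (Subring.inclusion (inf_le_right : O ⊓ K'.toSubring ≤ K'.toSubring)).toAlgebra
  have hinj : Function.Injective (algebraMap ↥(O ⊓ K'.toSubring) ↥K') :=
    Subring.inclusion_injective _
  let v : IsDedekindDomain.HeightOneSpectrum O → Valuation ↥K' ℤᵐ⁰ :=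
    fun P => (P.valuation K).comap K'.subtype
  have hR : ∀ x : ↥K', (∀ P, v P x ≤ 1) ↔
      ∃ r : ↥(O ⊓ K'.toSubring), algebraMap ↥(O ⊓ K'.toSubring) ↥K' r = x := by
    intro x
    constructor
    · intro h
      obtain ⟨r, hr⟩ :=
        IsDedekindDomain.HeightOneSpectrum.mem_integers_of_valuation_le_one (R := O) K (x : K) h
      have hxO : (x : K) ∈ O := by rw [← hr]; exact r.2
      exact ⟨⟨x, hxO, x.2⟩, rfl⟩
    · rintro ⟨r, rfl⟩ P
      exact P.valuation_le_one (K := K) (⟨r, r.2.1⟩ : O)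
  exact ⟨Or.inr ⟨aux_dedekind v hinj hR, aux_semilocal v hinj hR⟩, aux_frac v hinj hR⟩
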